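/- Fix b ∈ ℝ and ω > 0. Let t ≥ 0, η ∈ ℝ², and let y ∈ ℝ², y ≠ 0, be such that x^s(y,η) ≠ 0 for all s ∈ [0,t] (a condition that holds on a neighborhood of y). Then the action S(t,·,η), where S(t,y,η) := (1/2)∫₀ᵗ (|ξ^s|² − |A(x^s)|² − ω²|x^s|²) ds, is differentiable in y and its gradient satisfies ∇_y S(t,y,η) = (x^t_y)ᵀ ξ^t(y,η) − η, where x^t_y = cos(ωt)·I − (sin(ωt)/ω)·A_x(y) is the Jacobian matrix of x^t with respect to y and A_x(y) is the Jacobian matrix of A at y. -/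

import Mathlib

/-- The Aharonov–Bohm vector potential with flux `b`:
`A(x) = (−b x₂/|x|², b x₁/|x|²)` for `x ∈ ℝ² \ {0}`. -/
noncomputable def A (b : ℝ) (x : ℝ × ℝ) : ℝ × ℝ :=
  (-b * x.2 / (x.1 ^ 2 + x.2 ^ 2), b * x.1 / (x.1 ^ 2 + x.2 ^ 2))

/-- The wedge product `u ∧ v = u₁v₂ − u₂v₁` on `ℝ²`. -/
def wedge (u v : ℝ × ℝ) : ℝ := u.1 * v.2 - u.2 * v.1

/-- The Euclidean inner product on `ℝ²`. -/
def dot (u v : ℝ × ℝ) : ℝ := u.1 * v.1 + u.2 * v.2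

/-- The squared Euclidean norm on `ℝ²`. -/
def normSq2 (u : ℝ × ℝ) : ℝ := u.1 ^ 2 + u.2 ^ 2

/-- The classical trajectory `x^t(y,η) = cos(ωt)·y + (sin(ωt)/ω)·(η − A(y))`. -/
noncomputable def traj (b ω : ℝ) (y η : ℝ × ℝ) (t : ℝ) : ℝ × ℝ :=
  Real.cos (ω * t) • y + (Real.sin (ω * t) / ω) • (η - A b y)

/-- The momentum `ξ^s(y,η) = (d/ds)x^s + A(x^s)`, defined when `x^s ≠ 0`. -/
noncomputable def xi (b ω : ℝ) (y η : ℝ × ℝ) (s : ℝ) : ℝ × ℝ :=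
  deriv (traj b ω y η) s + A b (traj b ω y η s)

/-- The action `S(t,y,η) = (1/2)∫₀ᵗ (|ξ^s|² − |A(x^s)|² − ω²|x^s|²) ds`. -/
noncomputable def action (b ω : ℝ) (y η : ℝ × ℝ) (t : ℝ) : ℝ :=
  (1 / 2) * ∫ s in (0 : ℝ)..t,
    (normSq2 (xi b ω y η s) - normSq2 (A b (traj b ω y η s))
      - ω ^ 2 * normSq2 (traj b ω y η s))

/-- The Jacobian matrix of the Aharonov–Bohm potential `A` at `x ≠ 0`. -/
noncomputable def Amat (b : ℝ) (x : ℝ × ℝ) : Matrix (Fin 2) (Fin 2) ℝ :=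
  (b / (normSq2 x) ^ 2) •
    !![2 * x.1 * x.2, x.2 ^ 2 - x.1 ^ 2; x.2 ^ 2 - x.1 ^ 2, -(2 * x.1 * x.2)]

/-- The Jacobian matrix of `x^t` with respect to `y`:
`x^t_y = cos(ωt)·I − (sin(ωt)/ω)·A_x(y)`. -/
noncomputable def trajJacY (b ω : ℝ) (y : ℝ × ℝ) (t : ℝ) :
    Matrix (Fin 2) (Fin 2) ℝ :=
  Real.cos (ω * t) • (1 : Matrix (Fin 2) (Fin 2) ℝ) -
    (Real.sin (ω * t) / ω) • Amat b y

/-- View a pair as a vector indexed by `Fin 2`. -/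
def toVec (p : ℝ × ℝ) : Fin 2 → ℝ := ![p.1, p.2]

/-- View a vector indexed by `Fin 2` as a pair. -/
def toPair (v : Fin 2 → ℝ) : ℝ × ℝ := (v 0, v 1)

/-!
The trajectory `x^s` is the oscillator motion `x'' = -ω² x`. Since `A` is curl-free on `ℝ² \ {0}`,
its Jacobian is symmetric and the potential exerts no force, so `x^s` also satisfies the
Euler–Lagrange equations of `L(x, v) = ½|v|² + v · A(x) - ½ω²|x|²`, with conjugate momentum `ξ^s`.
Hence the `y`-derivative of `L` along the trajectory is the total derivative `d/ds ((x^s_y)ᵀ ξ^s)`,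
and its integral leaves only the boundary terms at `s = t` and at `s = 0`, where `x^0_y = 1` and
`ξ^0 = η`.
-/

open Set MeasureTheory Topology Function
open ContinuousLinearMap (fst snd coprod)

section PartialDerivative

variable {𝕜 H G E : Type*} [NontriviallyNormedField 𝕜] [NormedAddCommGroup H] [NormedSpace 𝕜 H]
  [NormedAddCommGroup G] [NormedSpace 𝕜 G] [NormedAddCommGroup E] [NormedSpace 𝕜 E]

theorem continuousAt_fderiv_left {F : H → G → E} {p : H × G}
    (hF : ContDiffAt 𝕜 1 (uncurry F) p) :
    ContinuousAt (fun q : H × G => fderiv 𝕜 (F · q.2) q.1) p := by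
  have hF' : ContDiffAt 𝕜 1 (uncurry fun (q : H × G) x => F x q.2) (p, p.1) :=
    ContDiffAt.comp (p, p.1) (g := uncurry F) (f := fun r : (H × G) × H => (r.2, r.1.2)) hF
      (by fun_prop)
  exact (hF'.fderiv (m := 0) contDiffAt_fst (by simp)).continuousAt

theorem hasFDerivAt_fderiv_left {F : H → G → E} {p : H × G}
    (hF : DifferentiableAt 𝕜 (uncurry F) p) :
    HasFDerivAt (F · p.2) (fderiv 𝕜 (F · p.2) p.1) p.1 :=
  (hF.comp (f := fun x => (x, p.2)) p.1 (by fun_prop)).hasFDerivAt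

theorem continuousOn_fderiv_left {F : H → G → E} {x₀ : H} {K : Set G}
    (hF : ∀ s ∈ K, ContDiffAt 𝕜 1 (uncurry F) (x₀, s)) :
    ContinuousOn (fun s => fderiv 𝕜 (F · s) x₀) K := fun s hs =>
  ((continuousAt_fderiv_left (hF s hs)).comp (f := fun s => (x₀, s))
    (by fun_prop)).continuousWithinAt

end PartialDerivative

section FirstVariation

variable {H E : Type*} [NormedAddCommGroup H] [NormedSpace ℝ H] [NormedAddCommGroup E]
  [NormedSpace ℝ E]

theorem hasFDerivAt_intervalIntegral_of_contDiffAt {F : H → ℝ → E} {x₀ : H} {a b : ℝ}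
    (hF : ∀ s ∈ uIcc a b, ContDiffAt ℝ 1 (uncurry F) (x₀, s)) :
    HasFDerivAt (fun x => ∫ s in a..b, F x s) (∫ s in a..b, fderiv ℝ (F · s) x₀) x₀ := by
  have hF_near : ∀ᶠ x in 𝓝 x₀, ∀ s ∈ uIcc a b, ContDiffAt ℝ 1 (uncurry F) (x, s) :=
    isCompact_uIcc.eventually_forall_of_forall_eventually fun s hs => (hF s hs).eventually (by simp)
  have hF_cont {x : H} (hx : ∀ s ∈ uIcc a b, ContDiffAt ℝ 1 (uncurry F) (x, s)) :
      ContinuousOn (F x) (uIcc a b) := fun s hs =>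
    ((hx s hs).continuousAt.comp (f := fun s => (x, s)) (by fun_prop)).continuousWithinAt
  have hF'_cont := continuousOn_fderiv_left hF
  obtain ⟨M, hM⟩ := isCompact_uIcc.exists_bound_of_continuousOn hF'_cont
  have hF'_bound : ∀ᶠ x in 𝓝 x₀, ∀ s ∈ uIcc a b, ‖fderiv ℝ (F · s) x‖ < M + 1 :=
    isCompact_uIcc.eventually_forall_of_forall_eventually fun s hs =>
      (continuousAt_fderiv_left (hF s hs)).norm.eventually_lt_const
        ((hM s hs).trans_lt (lt_add_one M))
  refine intervalIntegral.hasFDerivAt_integral_of_dominated_of_fderiv_le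
    (F' := fun x s => fderiv ℝ (F · s) x) (bound := fun _ => M + 1) (hF_near.and hF'_bound)
    ?_ (hF_cont hF).intervalIntegrable
    ((hF'_cont.mono uIoc_subset_uIcc).aestronglyMeasurable measurableSet_uIoc)
    (ae_of_all _ fun s hs x hx => (hx.2 s (uIoc_subset_uIcc hs)).le) intervalIntegrable_const
    (ae_of_all _ fun s hs x hx => hasFDerivAt_fderiv_left (p := (x, s))
      ((hx.1 s (uIoc_subset_uIcc hs)).differentiableAt one_ne_zero))
  filter_upwards [hF_near] with x hx
  exact ((hF_cont hx).mono uIoc_subset_uIcc).aestronglyMeasurable measurableSet_uIoc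

theorem hasFDerivAt_action_of_eulerLagrange {ℓ : E × E → ℝ} {X V : H → ℝ → E}
    {X' V' : ℝ → H →L[ℝ] E} {f p : ℝ → E →L[ℝ] ℝ} {y : H} {a b : ℝ}
    (hC : ∀ s ∈ uIcc a b, ContDiffAt ℝ 1 (uncurry fun y s => ℓ (X y s, V y s)) (y, s))
    (hℓ : ∀ s ∈ uIcc a b, HasFDerivAt ℓ (coprod (f s) (p s)) (X y s, V y s))
    (hX : ∀ s ∈ uIcc a b, HasFDerivAt (X · s) (X' s) y)
    (hV : ∀ s ∈ uIcc a b, HasFDerivAt (V · s) (V' s) y)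
    (hX' : ∀ s ∈ uIcc a b, HasDerivAt X' (V' s) s)
    (hp : ∀ s ∈ uIcc a b, HasDerivAt p (f s) s) :
    HasFDerivAt (fun y => ∫ s in a..b, ℓ (X y s, V y s))
      ((p b).comp (X' b) - (p a).comp (X' a)) y := by
  have hderiv : ∀ s ∈ uIcc a b, HasDerivAt (fun s => (p s).comp (X' s))
      (fderiv ℝ (fun y => ℓ (X y s, V y s)) y) s := fun s hs => by
    have hℓ' := (hℓ s hs).comp y ((hX s hs).prodMk (hV s hs))
    refine ((hp s hs).clm_comp (hX' s hs)).congr_deriv (Eq.trans ?_ hℓ'.fderiv.symm)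
    ext v
    simp
  rw [← intervalIntegral.integral_eq_sub_of_hasDerivAt hderiv
    (continuousOn_fderiv_left hC).intervalIntegrable]
  exact hasFDerivAt_intervalIntegral_of_contDiffAt hC

end FirstVariation

section Oscillator

variable {E : Type*} [NormedAddCommGroup E] [NormedSpace ℝ E] {ω : ℝ}

theorem hasDerivAt_cos_smul_add_sin_div_smul (hω : ω ≠ 0) (u w : E) (s : ℝ) :
    HasDerivAt (fun s => Real.cos (ω * s) • u + (Real.sin (ω * s) / ω) • w)
      (-(ω * Real.sin (ω * s)) • u + Real.cos (ω * s) • w) s := by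
  have hlin : HasDerivAt (fun s => ω * s) ω s := hasDerivAt_const_mul ω
  refine ((hlin.cos.smul_const u).add ((hlin.sin.div_const ω).smul_const w)).congr_deriv ?_
  rw [mul_div_cancel_right₀ _ hω, neg_mul, mul_comm]

theorem hasDerivAt_neg_sin_smul_add_cos_smul (hω : ω ≠ 0) (u w : E) (s : ℝ) :
    HasDerivAt (fun s => -(ω * Real.sin (ω * s)) • u + Real.cos (ω * s) • w)
      (-ω ^ 2 • (Real.cos (ω * s) • u + (Real.sin (ω * s) / ω) • w)) s := by
  have hlin : HasDerivAt (fun s => ω * s) ω s := hasDerivAt_const_mul ω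
  refine (((hlin.sin.const_mul ω).neg.smul_const u).add (hlin.cos.smul_const w)).congr_deriv ?_
  match_scalars <;> field_simp

end Oscillator

/-- The Euclidean inner product `dot` as a continuous bilinear map. -/
noncomputable def dotCLM : ℝ × ℝ →L[ℝ] ℝ × ℝ →L[ℝ] ℝ :=
  (ContinuousLinearMap.mul ℝ ℝ).bilinearComp (fst ℝ ℝ ℝ) (fst ℝ ℝ ℝ) +
    (ContinuousLinearMap.mul ℝ ℝ).bilinearComp (snd ℝ ℝ ℝ) (snd ℝ ℝ ℝ)

theorem dotCLM_apply (u v : ℝ × ℝ) : dotCLM u v = dot u v := rfl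

/-- The continuous linear endomorphism of `ℝ × ℝ` with a given matrix in the standard basis. -/
noncomputable def matCLM : Matrix (Fin 2) (Fin 2) ℝ ≃ₗ[ℝ] (ℝ × ℝ →L[ℝ] ℝ × ℝ) :=
  (Matrix.toLin (.finTwoProd ℝ) (.finTwoProd ℝ)).trans LinearMap.toContinuousLinearMap

theorem matCLM_one : matCLM 1 = .id ℝ (ℝ × ℝ) := by
  ext <;> simp [matCLM]

theorem toPair_toVec (v : ℝ × ℝ) : toPair (toVec v) = v := rfl

theorem matCLM_apply (M : Matrix (Fin 2) (Fin 2) ℝ) (v : ℝ × ℝ) :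
    matCLM M v = toPair (M.mulVec (toVec v)) := by
  rw [M.eta_fin_two]
  simp [matCLM, toPair, toVec, Matrix.toLin_finTwoProd_apply, Matrix.mulVec, dotProduct]

theorem dotCLM_comp_matCLM (u : ℝ × ℝ) (M : Matrix (Fin 2) (Fin 2) ℝ) :
    (dotCLM u).comp (matCLM M) = dotCLM (matCLM M.transpose u) := by
  refine ContinuousLinearMap.ext fun v => ?_
  simp only [ContinuousLinearMap.comp_apply, dotCLM_apply, matCLM_apply, dot, toPair, toVec,
    Matrix.mulVec, dotProduct, Fin.sum_univ_two, Matrix.transpose_apply, Matrix.cons_val_zero,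
    Matrix.cons_val_one]
  ring

theorem hasFDerivAt_normSq2 (x : ℝ × ℝ) : HasFDerivAt normSq2 (2 • dotCLM x) x := by
  refine ((hasFDerivAt_fst.pow 2).add (hasFDerivAt_snd.pow 2)).congr_fderiv ?_
  ext <;> simp [dotCLM_apply, dot]

theorem contDiff_normSq2 {n : WithTop ℕ∞} : ContDiff ℝ n normSq2 := by
  unfold normSq2
  fun_prop

theorem normSq2_ne_zero {x : ℝ × ℝ} (hx : x ≠ 0) : normSq2 x ≠ 0 := by
  contrapose! hx
  have ⟨h₁, h₂⟩ := (add_eq_zero_iff_of_nonneg (sq_nonneg x.1) (sq_nonneg x.2)).1 hx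
  exact Prod.ext (pow_eq_zero_iff two_ne_zero |>.1 h₁) (pow_eq_zero_iff two_ne_zero |>.1 h₂)

section Potential

variable {b : ℝ} {x : ℝ × ℝ}

theorem contDiffAt_A {n : WithTop ℕ∞} (hx : x ≠ 0) : ContDiffAt ℝ n (A b) x := by
  have hx' : x.1 ^ 2 + x.2 ^ 2 ≠ 0 := normSq2_ne_zero hx
  unfold A
  fun_prop (disch := assumption)

theorem matCLM_Amat_apply (v : ℝ × ℝ) :
    matCLM (Amat b x) v = (b / normSq2 x ^ 2) •
      (2 * x.1 * x.2 * v.1 + (x.2 ^ 2 - x.1 ^ 2) * v.2,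
        (x.2 ^ 2 - x.1 ^ 2) * v.1 - 2 * x.1 * x.2 * v.2) := by
  rw [Amat, map_smul, smul_apply]
  simp [matCLM, Matrix.toLin_finTwoProd_apply, sub_eq_add_neg]

theorem hasFDerivAt_A (hx : x ≠ 0) : HasFDerivAt (A b) (matCLM (Amat b x)) x := by
  have hx' : x.1 ^ 2 + x.2 ^ 2 ≠ 0 := normSq2_ne_zero hx
  have hinv := (hasDerivAt_inv hx').comp_hasFDerivAt x (hasFDerivAt_normSq2 x)
  have hfst : HasFDerivAt Prod.fst (fst ℝ ℝ ℝ) x := hasFDerivAt_fst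
  have hsnd : HasFDerivAt Prod.snd (snd ℝ ℝ ℝ) x := hasFDerivAt_snd
  refine (((hsnd.const_mul (-b)).mul hinv).prodMk ((hfst.const_mul b).mul hinv)).congr_fderiv ?_
  refine ContinuousLinearMap.ext fun v => ?_
  simp only [matCLM_Amat_apply, ContinuousLinearMap.prod_apply, add_apply, smul_apply,
    ContinuousLinearMap.coe_fst', ContinuousLinearMap.coe_snd', dotCLM_apply, dot, normSq2,
    comp_apply, smul_eq_mul, nsmul_eq_mul, Nat.cast_ofNat, Prod.smul_mk]
  congr 1 <;> field_simp <;> ring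

theorem Amat_transpose : (Amat b x).transpose = Amat b x := by
  ext i j
  fin_cases i <;> fin_cases j <;> simp [Amat]

end Potential

/-- The Lagrangian `½(|v + A(x)|² − |A(x)|² − ω²|x|²)` at the position-velocity pair `(x, v)`. -/
noncomputable def lagrangian (b ω : ℝ) (z : (ℝ × ℝ) × (ℝ × ℝ)) : ℝ :=
  1 / 2 * (normSq2 (z.2 + A b z.1) - normSq2 (A b z.1) - ω ^ 2 * normSq2 z.1)

/-- The velocity `(d/ds)x^s = −ω sin(ωs)·y + cos(ωs)·(η − A(y))` of the trajectory. -/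
noncomputable def velocity (b ω : ℝ) (y η : ℝ × ℝ) (s : ℝ) : ℝ × ℝ :=
  -(ω * Real.sin (ω * s)) • y + Real.cos (ω * s) • (η - A b y)

section Dynamics

variable {b ω s : ℝ} {x v y η : ℝ × ℝ}

theorem contDiffAt_lagrangian {n : WithTop ℕ∞} (hx : x ≠ 0) :
    ContDiffAt ℝ n (lagrangian b ω) (x, v) := by
  have hA : ContDiffAt ℝ n (fun z : (ℝ × ℝ) × (ℝ × ℝ) => A b z.1) (x, v) :=
    (contDiffAt_A hx).comp (x, v) contDiffAt_fst
  exact contDiffAt_const.mul (((contDiff_normSq2.contDiffAt.comp _ (contDiffAt_snd.add hA)).sub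
    (contDiff_normSq2.contDiffAt.comp _ hA)).sub
      (contDiffAt_const.mul (contDiff_normSq2.contDiffAt.comp _ contDiffAt_fst)))

theorem hasFDerivAt_lagrangian (hx : x ≠ 0) :
    HasFDerivAt (lagrangian b ω)
      (coprod (dotCLM (-ω ^ 2 • x + matCLM (Amat b x) v)) (dotCLM (v + A b x))) (x, v) := by
  have hfst : HasFDerivAt Prod.fst (fst ℝ (ℝ × ℝ) (ℝ × ℝ)) (x, v) := hasFDerivAt_fst
  have hA := (hasFDerivAt_A (b := b) hx).comp (x, v) hfst
  refine (((((hasFDerivAt_normSq2 _).comp _ (hasFDerivAt_snd.add hA)).sub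
    ((hasFDerivAt_normSq2 _).comp _ hA)).sub
      (((hasFDerivAt_normSq2 _).comp _ hfst).const_mul (ω ^ 2))).const_mul (1 / 2)).congr_fderiv ?_
  have hsymm (u : ℝ × ℝ) : dotCLM v (matCLM (Amat b x) u) = dotCLM (matCLM (Amat b x) v) u := by
    rw [← ContinuousLinearMap.comp_apply, dotCLM_comp_matCLM, Amat_transpose]
  refine ContinuousLinearMap.ext fun w => ?_
  simp only [smul_apply, sub_apply, add_apply, ContinuousLinearMap.comp_apply,
    ContinuousLinearMap.coprod_apply, ContinuousLinearMap.coe_fst', ContinuousLinearMap.coe_snd',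
    Pi.add_apply, comp_apply, map_add, map_smul, hsymm, smul_eq_mul, nsmul_eq_mul, Nat.cast_ofNat]
  ring

theorem contDiffAt_traj {n : WithTop ℕ∞} (hy : y ≠ 0) :
    ContDiffAt ℝ n (uncurry fun y s => traj b ω y η s) (y, s) := by
  have hA : ContDiffAt ℝ n (fun q : (ℝ × ℝ) × ℝ => A b q.1) (y, s) :=
    (contDiffAt_A hy).comp (y, s) contDiffAt_fst
  unfold traj uncurry
  fun_prop

theorem contDiffAt_velocity {n : WithTop ℕ∞} (hy : y ≠ 0) :
    ContDiffAt ℝ n (uncurry fun y s => velocity b ω y η s) (y, s) := by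
  have hA : ContDiffAt ℝ n (fun q : (ℝ × ℝ) × ℝ => A b q.1) (y, s) :=
    (contDiffAt_A hy).comp (y, s) contDiffAt_fst
  unfold velocity uncurry
  fun_prop

theorem matCLM_trajJacY :
    matCLM (trajJacY b ω y s) = Real.cos (ω * s) • .id ℝ (ℝ × ℝ) +
      (Real.sin (ω * s) / ω) • -matCLM (Amat b y) := by
  rw [trajJacY, map_sub, map_smul, map_smul, matCLM_one, smul_neg, sub_eq_add_neg]

theorem hasFDerivAt_traj (hy : y ≠ 0) :
    HasFDerivAt (fun y => traj b ω y η s) (matCLM (trajJacY b ω y s)) y := by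
  rw [matCLM_trajJacY]
  exact ((hasFDerivAt_id y).fun_const_smul (Real.cos (ω * s))).fun_add
    (((hasFDerivAt_A hy).const_sub η).fun_const_smul (Real.sin (ω * s) / ω))

theorem hasFDerivAt_velocity (hy : y ≠ 0) :
    HasFDerivAt (fun y => velocity b ω y η s) (-(ω * Real.sin (ω * s)) • .id ℝ (ℝ × ℝ) +
      Real.cos (ω * s) • -matCLM (Amat b y)) y :=
  ((hasFDerivAt_id y).fun_const_smul (-(ω * Real.sin (ω * s)))).fun_add
    (((hasFDerivAt_A hy).const_sub η).fun_const_smul (Real.cos (ω * s)))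

theorem hasDerivAt_matCLM_trajJacY (hω : ω ≠ 0) :
    HasDerivAt (fun s => matCLM (trajJacY b ω y s)) (-(ω * Real.sin (ω * s)) • .id ℝ (ℝ × ℝ) +
      Real.cos (ω * s) • -matCLM (Amat b y)) s := by
  simp only [matCLM_trajJacY]
  exact hasDerivAt_cos_smul_add_sin_div_smul hω _ _ s

theorem hasDerivAt_traj (hω : ω ≠ 0) : HasDerivAt (traj b ω y η) (velocity b ω y η s) s :=
  hasDerivAt_cos_smul_add_sin_div_smul hω y (η - A b y) s

theorem hasDerivAt_velocity (hω : ω ≠ 0) :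
    HasDerivAt (velocity b ω y η) (-ω ^ 2 • traj b ω y η s) s :=
  hasDerivAt_neg_sin_smul_add_cos_smul hω y (η - A b y) s

theorem xi_eq_velocity_add (hω : ω ≠ 0) :
    xi b ω y η s = velocity b ω y η s + A b (traj b ω y η s) := by
  rw [xi, (hasDerivAt_traj hω).deriv]

theorem hasDerivAt_xi (hω : ω ≠ 0) (hx : traj b ω y η s ≠ 0) :
    HasDerivAt (xi b ω y η)
      (-ω ^ 2 • traj b ω y η s + matCLM (Amat b (traj b ω y η s)) (velocity b ω y η s)) s := by
  have hA := (hasFDerivAt_A (b := b) hx).comp_hasDerivAt s (hasDerivAt_traj hω)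
  exact ((hasDerivAt_velocity hω).add hA).congr_of_eventuallyEq
    (.of_forall fun s => xi_eq_velocity_add hω)

theorem traj_zero : traj b ω y η 0 = y := by
  simp [traj]

theorem xi_zero (hω : ω ≠ 0) : xi b ω y η 0 = η := by
  simp [xi_eq_velocity_add hω, velocity, traj_zero]

theorem trajJacY_zero : trajJacY b ω y 0 = 1 := by
  simp [trajJacY]

theorem action_eq_integral_lagrangian (hω : ω ≠ 0) (t : ℝ) :
    action b ω y η t = ∫ s in (0 : ℝ)..t, lagrangian b ω (traj b ω y η s, velocity b ω y η s) := by
  simp only [action, lagrangian, xi_eq_velocity_add hω, intervalIntegral.integral_const_mul]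

end Dynamics

theorem action_grad_y_general (b : ℝ) {ω : ℝ} (hω : ω ≠ 0) (t : ℝ) (η y : ℝ × ℝ)
    (hne : ∀ s ∈ uIcc 0 t, traj b ω y η s ≠ 0) :
    HasFDerivAt (fun y' => action b ω y' η t)
      (dotCLM (toPair (Matrix.mulVec (Matrix.transpose (trajJacY b ω y t))
        (toVec (xi b ω y η t))) - η)) y := by
  have hy : y ≠ 0 := by simpa only [traj_zero] using hne 0 left_mem_uIcc
  have hvar := hasFDerivAt_action_of_eulerLagrange (ℓ := lagrangian b ω)
    (X := fun y s => traj b ω y η s) (V := fun y s => velocity b ω y η s)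
    (p := fun s => dotCLM (xi b ω y η s))
    (hC := fun s hs => (contDiffAt_lagrangian (hne s hs)).comp (y, s)
      ((contDiffAt_traj hy).prodMk (contDiffAt_velocity hy)))
    (hℓ := fun s hs => by
      simpa only [xi_eq_velocity_add hω] using hasFDerivAt_lagrangian (hne s hs))
    (hX := fun s _ => hasFDerivAt_traj hy)
    (hV := fun s _ => hasFDerivAt_velocity hy)
    (hX' := fun s _ => hasDerivAt_matCLM_trajJacY hω)
    (hp := fun s hs => dotCLM.hasFDerivAt.comp_hasDerivAt s (hasDerivAt_xi hω (hne s hs)))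
  simpa only [action_eq_integral_lagrangian hω, dotCLM_comp_matCLM, matCLM_apply, trajJacY_zero,
    xi_zero hω, Matrix.transpose_one, Matrix.one_mulVec, toPair_toVec, ← map_sub] using hvar

/-- The gradient of the action in `y` is `(x^t_y)ᵀ ξ^t(y,η) − η`. -/
theorem action_grad_y (b ω : ℝ) (hω : 0 < ω)
    (t : ℝ) (ht : 0 ≤ t) (η : ℝ × ℝ) (y : ℝ × ℝ) (hy : y ≠ 0)
    (hne : ∀ s ∈ Set.Icc (0 : ℝ) t, traj b ω y η s ≠ 0) :
    ∃ L : ℝ × ℝ →L[ℝ] ℝ,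
      HasFDerivAt (fun y' => action b ω y' η t) L y ∧
      ∀ v : ℝ × ℝ,
        L v = dot
          (toPair (Matrix.mulVec (Matrix.transpose (trajJacY b ω y t)) (toVec (xi b ω y η t))) - η)
          v := by
  exact ⟨_, action_grad_y_general b hω.ne' t η y (by rwa [Set.uIcc_of_le ht]), fun v => rfl⟩
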